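/- For every integer q ≥ 2, the graph MEbar_q admits a frozen (2q+1)-clique-partition. -/

import Mathlib

/-- `f` describes a partition of the vertices of `G` into at most `k` cliques:
each fibre of `f` is a clique. -/
def IsCliquePartition {V : Type*} (G : SimpleGraph V) {k : ℕ} (f : V → Fin k) : Prop :=
  ∀ a b : V, f a = f b → a ≠ b → G.Adj a b

/-- A clique partition is frozen if every vertex has a non-neighbour in each clique
of the partition other than the clique containing it. -/
def IsFrozenCliquePartition {V : Type*} (G : SimpleGraph V) {k : ℕ} (f : V → Fin k) : Prop :=
  IsCliquePartition G f ∧ ∀ (v : V) (j : Fin k), j ≠ f v → ∃ w : V, f w = j ∧ ¬ G.Adj v w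

/-- The graph `MEbar_q`.  The vertices `0, 1, …, q+1` of `Fin (4q+2)` are
`u_0, …, u_{q+1}` and, for `1 ≤ i ≤ q`, the vertices `q+3i-1, q+3i, q+3i+1` are
`v_{i1}, v_{i2}, v_{i3}`; listed in this order the vertices form a Hamiltonian cycle,
and the extra edges are `u_i v_{i2}` and `v_{i1} v_{i3}` for `1 ≤ i ≤ q`. -/
def MEbar (q : ℕ) : SimpleGraph (Fin (4*q+2)) :=
  SimpleGraph.fromRel (fun a b =>
    b.val = a.val + 1 ∨ (a.val = 0 ∧ b.val = 4*q+1) ∨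
    (∃ i, 1 ≤ i ∧ i ≤ q ∧ a.val = i ∧ b.val = q + 3*i) ∨
    (∃ i, 1 ≤ i ∧ i ≤ q ∧ a.val = q + 3*i - 1 ∧ b.val = q + 3*i + 1))

/-!
The cliques are the edges of a perfect matching: `u_0 v_{q3}`, `u_{q+1} v_{11}`, the chords
`u_i v_{i2}`, and the edges `v_{i3} v_{(i+1)1}`. A perfect matching is a frozen clique partition as
soon as none of its edges lies in a triangle, and the only triangles of `MEbar_q` are
`v_{i1} v_{i2} v_{i3}`, none of whose sides is matched.
-/

section PerfectMatching

open SimpleGraph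

variable {V : Type*} {G : SimpleGraph V} {M : G.Subgraph}

theorem two_mul_card_edgeSet_of_isPerfectMatching [Finite V] (hM : M.IsPerfectMatching) :
    2 * Nat.card M.edgeSet = Nat.card V := by
  classical
  have := Fintype.ofFinite V
  have degree_eq_one (v : V) : M.spanningCoe.degree v = 1 := by
    rw [Subgraph.degree_spanningCoe]
    exact Subgraph.isPerfectMatching_iff_forall_degree.mp hM v
  calc 2 * Nat.card M.edgeSet
      = 2 * M.spanningCoe.edgeFinset.card := by
        rw [← Subgraph.edgeSet_spanningCoe, Nat.card_eq_fintype_card, edgeFinset_card]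
    _ = ∑ v, M.spanningCoe.degree v := M.spanningCoe.sum_degrees_eq_twice_card_edges.symm
    _ = Nat.card V := by simp [degree_eq_one]

theorem exists_fin_labelling_of_isPerfectMatching [Finite V] {k : ℕ} (hM : M.IsPerfectMatching)
    (hcard : Nat.card V = 2 * k) :
    ∃ f : V → Fin k, (∀ v w, f v = f w → v ≠ w → M.Adj v w) ∧
      ∀ j, ∃ a b, M.Adj a b ∧ f a = j ∧ f b = j := by
  have card_edgeSet : Nat.card M.edgeSet = k := by
    have := two_mul_card_edgeSet_of_isPerfectMatching hM
    omega
  let label : M.edgeSet ≃ Fin k := Finite.equivFinOfCardEq card_edgeSet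
  let edge (v : V) : M.edgeSet := hM.1.toEdge ⟨v, hM.2 v⟩
  refine ⟨label ∘ edge, fun v w hvw hne => ?_, fun j => ?_⟩
  · have mem_edge (u : V) : u ∈ (edge u : Sym2 V) := hM.1.mem_coe_toEdge (hM.2 u)
    have edge_eq : edge v = edge w := label.injective hvw
    have edge_eq_mk : (edge v : Sym2 V) = s(v, w) :=
      (Sym2.mem_and_mem_iff hne).mp ⟨mem_edge v, edge_eq ▸ mem_edge w⟩
    exact Subgraph.mem_edgeSet.mp (edge_eq_mk ▸ (edge v).2)
  · obtain ⟨⟨⟨a, b⟩, hab⟩, rfl⟩ := label.surjective j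
    exact ⟨a, b, hab, congrArg label (hM.1.toEdge_eq_of_adj hab),
      congrArg label ((hM.1.toEdge_eq_toEdge_of_adj hab).symm.trans (hM.1.toEdge_eq_of_adj hab))⟩

theorem exists_isFrozenCliquePartition_of_isPerfectMatching [Finite V] {k : ℕ}
    (hM : M.IsPerfectMatching) (htriangle : ∀ a b, M.Adj a b → G.commonNeighbors a b = ∅)
    (hcard : Nat.card V = 2 * k) : ∃ f : V → Fin k, IsFrozenCliquePartition G f := by
  obtain ⟨f, adj_of_eq, exists_edge⟩ := exists_fin_labelling_of_isPerfectMatching hM hcard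
  refine ⟨f, fun v w hvw hne => (adj_of_eq v w hvw hne).adj_sub, fun v j _ => ?_⟩
  obtain ⟨a, b, hab, ha, hb⟩ := exists_edge j
  by_cases hva : G.Adj v a
  · have hvb : ¬ G.Adj v b := fun hvb =>
      (htriangle a b hab).subset ⟨hva.symm, hvb.symm⟩
    exact ⟨b, hb, hvb⟩
  · exact ⟨a, ha, hva⟩

end PerfectMatching

namespace MEbar

variable {q : ℕ} {a b c : Fin (4 * q + 2)}

theorem adj_iff_of_lt (hab : a < b) :
    (MEbar q).Adj a b ↔ b.val = a + 1 ∨ (a.val = 0 ∧ b.val = 4 * q + 1) ∨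
      (1 ≤ a.val ∧ a.val ≤ q ∧ b.val = q + 3 * a) ∨
      (q < a.val ∧ (a - q : ℕ) % 3 = 2 ∧ b.val = a + 2) := by
  rw [MEbar, SimpleGraph.fromRel_adj]
  have := b.isLt
  constructor
  · rintro ⟨-, (h | h | ⟨i, h⟩ | ⟨i, h⟩) | h | h | ⟨i, h⟩ | ⟨i, h⟩⟩ <;> omega
  · rintro (h | h | h | h) <;> refine ⟨hab.ne, Or.inl ?_⟩
    · exact Or.inl h
    · exact Or.inr (Or.inl h)
    · exact Or.inr (Or.inr (Or.inl ⟨a, by omega⟩))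
    · exact Or.inr (Or.inr (Or.inr ⟨(a - q) / 3 + 1, by omega⟩))

/-- The index `i` of the block `v_{i1}, v_{i2}, v_{i3}` containing a vertex, and `0` on every `u_i`
(where the subtraction may truncate). -/
def block (q : ℕ) (a : Fin (4 * q + 2)) : ℕ := (a - q + 1) / 3

theorem block_eq_of_triangle_of_lt (hab : a < b) (hbc : b < c) (adj_ab : (MEbar q).Adj a b)
    (adj_bc : (MEbar q).Adj b c) (adj_ac : (MEbar q).Adj a c) :
    block q a ≠ 0 ∧ block q a = block q b ∧ block q b = block q c := by
  rw [adj_iff_of_lt hab] at adj_ab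
  rw [adj_iff_of_lt hbc] at adj_bc
  rw [adj_iff_of_lt (hab.trans hbc)] at adj_ac
  unfold block
  omega

theorem block_eq_of_mem_commonNeighbors (hab : a < b) (adj_ab : (MEbar q).Adj a b)
    (hc : c ∈ (MEbar q).commonNeighbors a b) : block q a ≠ 0 ∧ block q a = block q b := by
  rw [SimpleGraph.mem_commonNeighbors] at hc
  obtain ⟨adj_ac, adj_bc⟩ := hc
  rcases lt_or_gt_of_ne adj_ac.ne with hac | hca
  · rcases lt_or_gt_of_ne adj_bc.ne with hbc | hcb
    · obtain ⟨ha, hab', -⟩ := block_eq_of_triangle_of_lt hab hbc adj_ab adj_bc adj_ac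
      exact ⟨ha, hab'⟩
    · obtain ⟨ha, hac', hcb'⟩ := block_eq_of_triangle_of_lt hac hcb adj_ac adj_bc.symm adj_ab
      exact ⟨ha, hac'.trans hcb'⟩
  · obtain ⟨hc, hca', hab'⟩ := block_eq_of_triangle_of_lt hca hab adj_ac.symm adj_ab adj_bc.symm
    exact ⟨hca' ▸ hc, hab'⟩

/-- The matched pairs `u_0 v_{q3}`, `u_i v_{i2}` for `1 ≤ i ≤ q`, and the consecutive vertices
`q + 3i + 1, q + 3i + 2` for `i < q`, that is `u_{q+1} v_{11}` for `i = 0` and `v_{i3} v_{(i+1)1}`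
for `1 ≤ i < q`. The smaller vertex comes first. -/
def IsMatchedPair (q : ℕ) (a b : Fin (4 * q + 2)) : Prop :=
  (a.val = 0 ∧ b.val = 4 * q + 1) ∨
  (∃ i, 1 ≤ i ∧ i ≤ q ∧ a.val = i ∧ b.val = q + 3 * i) ∨
  (∃ i < q, a.val = q + 3 * i + 1 ∧ b.val = q + 3 * i + 2)

theorem IsMatchedPair.lt (h : IsMatchedPair q a b) : a < b := by
  rcases h with h | ⟨i, h⟩ | ⟨i, h⟩ <;> omega

theorem IsMatchedPair.adj (h : IsMatchedPair q a b) : (MEbar q).Adj a b := by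
  rw [adj_iff_of_lt h.lt]
  rcases h with h | ⟨i, h⟩ | ⟨i, h⟩ <;> omega

theorem IsMatchedPair.block_eq_zero_of_eq (h : IsMatchedPair q a b)
    (hblock : block q a = block q b) : block q a = 0 := by
  unfold block at *
  rcases h with h | ⟨i, h⟩ | ⟨i, h⟩ <;> omega

theorem IsMatchedPair.commonNeighbors_eq_empty (h : IsMatchedPair q a b) :
    (MEbar q).commonNeighbors a b = ∅ := by
  refine Set.eq_empty_of_forall_notMem fun c hc => ?_
  obtain ⟨block_ne_zero, block_eq⟩ := block_eq_of_mem_commonNeighbors h.lt h.adj hc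
  exact block_ne_zero (h.block_eq_zero_of_eq block_eq)

/-- The spanning subgraph of `MEbar q` whose edges are the matched pairs. -/
def matching (q : ℕ) : (MEbar q).Subgraph where
  verts := Set.univ
  Adj a b := IsMatchedPair q a b ∨ IsMatchedPair q b a
  adj_sub h := h.elim IsMatchedPair.adj fun h => h.adj.symm
  edge_vert _ := Set.mem_univ _
  symm := ⟨fun _ _ => Or.symm⟩

theorem exists_matching_adj (a : Fin (4 * q + 2)) : ∃ b, (matching q).Adj a b := by
  have := a.isLt
  rcases Nat.eq_zero_or_pos a with ha | ha
  · exact ⟨⟨4 * q + 1, by omega⟩, .inl (.inl ⟨ha, rfl⟩)⟩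
  by_cases haq : a.val ≤ q
  · exact ⟨⟨q + 3 * a, by omega⟩, .inl (.inr (.inl ⟨a, ha, haq, rfl, rfl⟩))⟩
  obtain ⟨i, hi | hi | hi⟩ : ∃ i, a.val = q + 3 * i + 1 ∨ a.val = q + 3 * i + 2 ∨
      a.val = q + 3 * i + 3 := ⟨(a - q - 1) / 3, by omega⟩
  · by_cases hiq : i < q
    · exact ⟨⟨q + 3 * i + 2, by omega⟩, .inl (.inr (.inr ⟨i, hiq, hi, rfl⟩))⟩
    · exact ⟨⟨0, by omega⟩, .inr (.inl ⟨rfl, by omega⟩)⟩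
  · exact ⟨⟨q + 3 * i + 1, by omega⟩, .inr (.inr (.inr ⟨i, by omega, rfl, hi⟩))⟩
  · exact ⟨⟨i + 1, by omega⟩, .inr (.inr (.inl ⟨i + 1, by omega, by omega, rfl, hi⟩))⟩

theorem eq_of_matching_adj (hab : (matching q).Adj a b) (hac : (matching q).Adj a c) : b = c := by
  rcases hab with (h | ⟨i, h⟩ | ⟨i, h⟩) | (h | ⟨i, h⟩ | ⟨i, h⟩) <;>
    rcases hac with (h' | ⟨i', h'⟩ | ⟨i', h'⟩) | (h' | ⟨i', h'⟩ | ⟨i', h'⟩) <;> omega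

theorem isPerfectMatching_matching (q : ℕ) : (matching q).IsPerfectMatching :=
  SimpleGraph.Subgraph.isPerfectMatching_iff.mpr fun a =>
    existsUnique_of_exists_of_unique (exists_matching_adj a) fun _ _ => eq_of_matching_adj

theorem commonNeighbors_eq_empty_of_matching_adj (hab : (matching q).Adj a b) :
    (MEbar q).commonNeighbors a b = ∅ := by
  rcases hab with h | h
  · exact h.commonNeighbors_eq_empty
  · rw [SimpleGraph.commonNeighbors_symm, h.commonNeighbors_eq_empty]

end MEbar

/-- for every `q ≥ 2`, `MEbar_q` admits a frozen `(2q+1)`-clique-partition. -/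
theorem stmt8 : ∀ q : ℕ, 2 ≤ q →
    ∃ f : Fin (4*q+2) → Fin (2*q+1), IsFrozenCliquePartition (MEbar q) f := by
  intro q _
  have hcard : Nat.card (Fin (4 * q + 2)) = 2 * (2 * q + 1) := by
    rw [Nat.card_fin]
    ring
  exact exists_isFrozenCliquePartition_of_isPerfectMatching (MEbar.isPerfectMatching_matching q)
    (fun _ _ => MEbar.commonNeighbors_eq_empty_of_matching_adj) hcard
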